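/- Let d = 2 and 1 ≤ r < 2. Then for no exponents 1 ≤ p ≤ ∞ and 1 ≤ q ≤ ∞ is the operator V_r^I A bounded from L^p(ℝ²) to L^q(ℝ²). -/

import Mathlib

open MeasureTheory Metric Set
open scoped ENNReal NNReal FourierTransform

noncomputable section

/-- Euclidean `d`-space. -/
abbrev Euc (d : ℕ) : Type := EuclideanSpace ℝ (Fin d)

/-- The normalized surface measure `σ` on the unit sphere `S^{d-1} ⊆ ℝ^d`. -/
def sphereMeasure (d : ℕ) : Measure (Euc d) :=
  (((volume : Measure (Euc d)).toSphere Set.univ)⁻¹ : ℝ≥0∞) •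
    ((volume : Measure (Euc d)).toSphere.map Subtype.val)

/-- The spherical average `A_t f(x) = ∫_{S^{d-1}} f(x - t y) dσ(y)`. -/
def sphAvg {d : ℕ} (f : Euc d → ℂ) (t : ℝ) (x : Euc d) : ℂ :=
  ∫ y, f (x - t • y) ∂(sphereMeasure d)

/-- The `r`-variation of the family `t ↦ a t` over the set `E ⊆ ℝ`. -/
def rVar (r : ℝ) (E : Set ℝ) (a : ℝ → ℂ) : ℝ≥0∞ :=
  ⨆ (N : ℕ) (t : Fin (N + 1) → ℝ) (_ : StrictMono t) (_ : ∀ i, t i ∈ E),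
    (∑ i : Fin N, (‖a (t i.succ) - a (t i.castSucc)‖₊ : ℝ≥0∞) ^ r) ^ (1 / r)

/-- The global variation operator `V_r A` for the spherical means. -/
def VrA {d : ℕ} (r : ℝ) (f : Euc d → ℂ) (x : Euc d) : ℝ≥0∞ :=
  rVar r (Set.Ioi 0) (fun t => sphAvg f t x)

/-- The local variation operator `V_r^I A`, `I = [1,2]`. -/
def VrIA {d : ℕ} (r : ℝ) (f : Euc d → ℂ) (x : Euc d) : ℝ≥0∞ :=
  rVar r (Set.Icc 1 2) (fun t => sphAvg f t x)

/-- `L^q` norm (with respect to `μ`) of an `ℝ≥0∞`-valued function, `1 ≤ q ≤ ∞`. -/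
def lqNorm {α : Type*} [MeasurableSpace α] (q : ℝ≥0∞) (g : α → ℝ≥0∞)
    (μ : Measure α) : ℝ≥0∞ :=
  if q = ∞ then essSup g μ else (∫⁻ x, g x ^ q.toReal ∂μ) ^ (1 / q.toReal)

/-- Boundedness `L^p → L^q` of an `ℝ≥0∞`-valued operator (exponents in `ℝ≥0∞`). -/
def IsBddLpLq (d : ℕ) (p q : ℝ≥0∞) (T : (Euc d → ℂ) → Euc d → ℝ≥0∞) : Prop :=
  ∃ C : ℝ≥0, ∀ f : Euc d → ℂ, MemLp f p volume →
    lqNorm q (T f) volume ≤ C * eLpNorm f p volume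

/-!
The spherical average at radius `t` of a plane wave of frequency `l` in the plane is the wave itself
times `J₀(lt)`, so its `r`-variation over `t ∈ [1, 2]` is that of `t ↦ J₀(lt)` at every point. By
Bessel's equation `u = √s J₀` solves `u'' = -(1 + 1 / (4 s²)) u`; hence `e^{is} (u + i u')` has an
integrable logarithmic derivative and a nonzero limit, and `√s J₀(s) = A cos (s - φ) + o(1)` with
`A > 0`. Suitable `l → ∞` thus give about `l` alternations of size `l ^ (-1/2)`, and an
`r`-variation of order `l ^ (1/r - 1/2)`, which is unbounded for `r < 2`. Cutting the waves off to
`|x| < 3` leaves all this unchanged on the unit ball and makes their `L^p` norms independent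
of `l`.
-/

open scoped Real

section LimitsOfSolutions

open Filter Topology

variable {E : Type*} [NormedAddCommGroup E] [InnerProductSpace ℝ E]
  {w w' : ℝ → E} {b β : ℝ → ℝ} {a L : ℝ}

lemma hasDerivAt_norm_sq_mul_exp {s : ℝ} (hw : HasDerivAt w (w' s) s) (hβ : HasDerivAt β (b s) s)
    (c : ℝ) :
    HasDerivAt (fun s => ‖w s‖ ^ 2 * Real.exp (c * β s))
      ((2 * inner ℝ (w s) (w' s) + c * b s * ‖w s‖ ^ 2) * Real.exp (c * β s)) s :=
  (hw.norm_sq.mul (hβ.const_mul c).exp).congr_deriv (by ring)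

lemma abs_inner_deriv_le {s : ℝ} (hb : ‖w' s‖ ≤ b s * ‖w s‖) :
    |inner ℝ (w s) (w' s)| ≤ b s * ‖w s‖ ^ 2 := by
  calc |inner ℝ (w s) (w' s)| ≤ ‖w s‖ * ‖w' s‖ := abs_real_inner_le_norm _ _
    _ ≤ ‖w s‖ * (b s * ‖w s‖) := by gcongr
    _ = b s * ‖w s‖ ^ 2 := by ring

lemma monotoneOn_norm_sq_mul_exp (hw : ∀ s ∈ Ici a, HasDerivAt w (w' s) s)
    (hβ : ∀ s ∈ Ici a, HasDerivAt β (b s) s) (hb : ∀ s ∈ Ici a, ‖w' s‖ ≤ b s * ‖w s‖) :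
    MonotoneOn (fun s => ‖w s‖ ^ 2 * Real.exp (2 * β s)) (Ici a) := by
  have hd s (hs : s ∈ Ici a) := hasDerivAt_norm_sq_mul_exp (hw s hs) (hβ s hs) 2
  refine monotoneOn_of_hasDerivWithinAt_nonneg (convex_Ici a)
    (fun s hs => (hd s hs).continuousAt.continuousWithinAt)
    (fun s hs => (hd s (interior_subset hs)).hasDerivWithinAt) fun s hs => ?_
  have := (abs_le.1 (abs_inner_deriv_le (hb s (interior_subset hs)))).1
  exact mul_nonneg (by linarith) (Real.exp_nonneg _)

lemma antitoneOn_norm_sq_mul_exp (hw : ∀ s ∈ Ici a, HasDerivAt w (w' s) s)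
    (hβ : ∀ s ∈ Ici a, HasDerivAt β (b s) s) (hb : ∀ s ∈ Ici a, ‖w' s‖ ≤ b s * ‖w s‖) :
    AntitoneOn (fun s => ‖w s‖ ^ 2 * Real.exp (-2 * β s)) (Ici a) := by
  have hd s (hs : s ∈ Ici a) := hasDerivAt_norm_sq_mul_exp (hw s hs) (hβ s hs) (-2)
  refine antitoneOn_of_hasDerivWithinAt_nonpos (convex_Ici a)
    (fun s hs => (hd s hs).continuousAt.continuousWithinAt)
    (fun s hs => (hd s (interior_subset hs)).hasDerivWithinAt) fun s hs => ?_
  have := (abs_le.1 (abs_inner_deriv_le (hb s (interior_subset hs)))).2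
  exact mul_nonpos_of_nonpos_of_nonneg (by linarith) (Real.exp_nonneg _)

lemma exists_norm_le_of_norm_deriv_le (hw : ∀ s ∈ Ici a, HasDerivAt w (w' s) s)
    (hβ : ∀ s ∈ Ici a, HasDerivAt β (b s) s) (hb : ∀ s ∈ Ici a, ‖w' s‖ ≤ b s * ‖w s‖)
    (hβL : ∀ s ∈ Ici a, β s ≤ L) : ∃ K, ∀ s ∈ Ici a, ‖w s‖ ≤ K := by
  refine ⟨√(‖w a‖ ^ 2 * Real.exp (-2 * β a) * Real.exp (2 * L)),
    fun s hs => Real.le_sqrt_of_sq_le ?_⟩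
  have hanti := antitoneOn_norm_sq_mul_exp hw hβ hb self_mem_Ici hs hs
  calc ‖w s‖ ^ 2 = ‖w s‖ ^ 2 * Real.exp (-2 * β s) * Real.exp (2 * β s) := by
        rw [mul_assoc, ← Real.exp_add, neg_mul, neg_add_cancel, Real.exp_zero, mul_one]
    _ ≤ ‖w a‖ ^ 2 * Real.exp (-2 * β a) * Real.exp (2 * L) := by
        gcongr
        exact hβL s hs

variable [CompleteSpace E]

lemma integrableOn_deriv_of_norm_deriv_le (hw : ∀ s ∈ Ici a, HasDerivAt w (w' s) s)
    (hβ : ∀ s ∈ Ici a, HasDerivAt β (b s) s) (hb0 : ∀ s ∈ Ici a, 0 ≤ b s)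
    (hb : ∀ s ∈ Ici a, ‖w' s‖ ≤ b s * ‖w s‖) (hlim : Tendsto β atTop (𝓝 L)) :
    IntegrableOn w' (Ioi a) := by
  have hmono : MonotoneOn β (Ici a) :=
    monotoneOn_of_hasDerivWithinAt_nonneg (convex_Ici a)
      (fun s hs => (hβ s hs).continuousAt.continuousWithinAt)
      (fun s hs => (hβ s (interior_subset hs)).hasDerivWithinAt)
      fun s hs => hb0 s (interior_subset hs)
  have hβL : ∀ s ∈ Ici a, β s ≤ L := fun s hs =>
    ge_of_tendsto hlim <| (eventually_ge_atTop s).mono fun t hst => hmono hs (hs.trans hst) hst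
  obtain ⟨K, hK⟩ := exists_norm_le_of_norm_deriv_le hw hβ hb hβL
  have hb_int : IntegrableOn b (Ioi a) :=
    integrableOn_Ioi_deriv_of_nonneg (hβ a self_mem_Ici).continuousAt.continuousWithinAt
      (fun s hs => hβ s hs.out.le) (fun s hs => hb0 s hs.out.le) hlim
  have hw'_meas : AEStronglyMeasurable w' (volume.restrict (Ioi a)) :=
    (stronglyMeasurable_deriv w).aestronglyMeasurable.congr <|
      (ae_restrict_mem measurableSet_Ioi).mono fun s hs => (hw s hs.out.le).deriv
  refine (hb_int.mul_const K).mono' hw'_meas <|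
    (ae_restrict_mem measurableSet_Ioi).mono fun s hs => ?_
  exact (hb s hs.out.le).trans <| mul_le_mul_of_nonneg_left (hK s hs.out.le) (hb0 s hs.out.le)

theorem exists_tendsto_ne_zero_of_norm_deriv_le (hw : ∀ s ∈ Ici a, HasDerivAt w (w' s) s)
    (hβ : ∀ s ∈ Ici a, HasDerivAt β (b s) s) (hb0 : ∀ s ∈ Ici a, 0 ≤ b s)
    (hb : ∀ s ∈ Ici a, ‖w' s‖ ≤ b s * ‖w s‖) (hlim : Tendsto β atTop (𝓝 L)) (hwa : w a ≠ 0) :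
    ∃ z ≠ 0, Tendsto w atTop (𝓝 z) := by
  have hz := tendsto_limUnder_of_hasDerivAt_of_integrableOn_Ioi
    (fun s (hs : s ∈ Ioi a) => hw s hs.out.le)
    (integrableOn_deriv_of_norm_deriv_le hw hβ hb0 hb hlim)
  refine ⟨_, fun h0 => ?_, hz⟩
  have henergy : Tendsto (fun s => ‖w s‖ ^ 2 * Real.exp (2 * β s)) atTop (𝓝 0) := by
    simpa [h0] using (hz.norm.pow 2).mul (hlim.const_mul 2).rexp
  have hle : ‖w a‖ ^ 2 * Real.exp (2 * β a) ≤ 0 :=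
    ge_of_tendsto henergy <| (eventually_ge_atTop a).mono fun s hs =>
      monotoneOn_norm_sq_mul_exp hw hβ hb self_mem_Ici hs hs
  have : 0 < ‖w a‖ := norm_pos_iff.2 hwa
  exact hle.not_gt (by positivity)

end LimitsOfSolutions

section AmplitudePhase

open Filter Topology

variable {u v q : ℝ → ℝ} {s : ℝ}

/-- The solution `u`, `v = u'` of a perturbed oscillator `u'' = -(1 + q) u` seen in the frame
rotating with the free oscillation: `e^{is} (u + i v)`, which is constant when `q = 0`. -/
def rotatedSolution (u v : ℝ → ℝ) (s : ℝ) : ℂ :=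
  Complex.exp (s * Complex.I) * (u s + v s * Complex.I)

lemma norm_rotatedSolution (u v : ℝ → ℝ) (s : ℝ) :
    ‖rotatedSolution u v s‖ = ‖(u s + v s * Complex.I : ℂ)‖ := by
  rw [rotatedSolution, norm_mul, Complex.norm_exp_ofReal_mul_I, one_mul]

lemma abs_le_norm_rotatedSolution (u v : ℝ → ℝ) (s : ℝ) : |u s| ≤ ‖rotatedSolution u v s‖ := by
  simpa [norm_rotatedSolution] using Complex.abs_re_le_norm (u s + v s * Complex.I)

lemma rotatedSolution_ne_zero (h : u s ≠ 0 ∨ v s ≠ 0) : rotatedSolution u v s ≠ 0 := by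
  rw [← norm_ne_zero_iff, norm_rotatedSolution, norm_ne_zero_iff]
  intro h0
  have hre : u s = 0 := by simpa using congrArg Complex.re h0
  have him : v s = 0 := by simpa using congrArg Complex.im h0
  exact h.elim (· hre) (· him)

lemma hasDerivAt_rotatedSolution (hu : HasDerivAt u (v s) s)
    (hv : HasDerivAt v (-(1 + q s) * u s) s) :
    HasDerivAt (rotatedSolution u v)
      (Complex.exp (s * Complex.I) * ((-(q s * u s) : ℝ) * Complex.I)) s := by
  have hexp := ((hasDerivAt_id s).ofReal_comp.mul_const Complex.I).cexp
  have hsum := hu.ofReal_comp.add (hv.ofReal_comp.mul_const Complex.I)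
  refine (hexp.mul hsum).congr_deriv ?_
  simp only [id, Pi.add_apply]
  push_cast
  linear_combination Complex.exp (s * Complex.I) * v s * Complex.I_sq

lemma sub_norm_mul_cos_sub_arg (z : ℂ) :
    u s - ‖z‖ * Real.cos (s - z.arg) =
      (Complex.exp ((-s : ℝ) * Complex.I) * (rotatedSolution u v s - z)).re := by
  have hu : (Complex.exp ((-s : ℝ) * Complex.I) * rotatedSolution u v s).re = u s := by
    rw [rotatedSolution, ← mul_assoc, ← Complex.exp_add]
    simp
  have hz : (Complex.exp ((-s : ℝ) * Complex.I) * z).re = ‖z‖ * Real.cos (s - z.arg) := by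
    nth_rw 1 [← Complex.norm_mul_exp_arg_mul_I z]
    rw [mul_left_comm, ← Complex.exp_add, ← add_mul, ← Complex.ofReal_add, Complex.re_ofReal_mul,
      Complex.exp_ofReal_mul_I_re, ← Real.cos_neg]
    ring_nf
  rw [mul_sub, Complex.sub_re, hu, hz]

theorem exists_tendsto_sub_mul_cos {b β : ℝ → ℝ} {a L : ℝ}
    (hu : ∀ s ∈ Ici a, HasDerivAt u (v s) s)
    (hv : ∀ s ∈ Ici a, HasDerivAt v (-(1 + q s) * u s) s)
    (hq : ∀ s ∈ Ici a, |q s| ≤ b s) (hβ : ∀ s ∈ Ici a, HasDerivAt β (b s) s)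
    (hlim : Tendsto β atTop (𝓝 L)) (ha : u a ≠ 0 ∨ v a ≠ 0) :
    ∃ A > 0, ∃ φ, Tendsto (fun s => u s - A * Real.cos (s - φ)) atTop (𝓝 0) := by
  have hb0 : ∀ s ∈ Ici a, 0 ≤ b s := fun s hs => (abs_nonneg _).trans (hq s hs)
  have hslow : ∀ s ∈ Ici a, ‖Complex.exp (s * Complex.I) * ((-(q s * u s) : ℝ) * Complex.I)‖ ≤
      b s * ‖rotatedSolution u v s‖ := fun s hs => by
    rw [norm_mul, norm_mul, Complex.norm_exp_ofReal_mul_I, Complex.norm_I, Complex.norm_real,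
      norm_neg, norm_mul, one_mul, mul_one]
    exact mul_le_mul (hq s hs) (abs_le_norm_rotatedSolution u v s) (norm_nonneg _) (hb0 s hs)
  obtain ⟨z, hz0, hz⟩ := exists_tendsto_ne_zero_of_norm_deriv_le
    (fun s hs => hasDerivAt_rotatedSolution (hu s hs) (hv s hs)) hβ hb0 hslow hlim
    (rotatedSolution_ne_zero ha)
  refine ⟨‖z‖, norm_pos_iff.2 hz0, z.arg,
    squeeze_zero_norm (fun s => ?_) (tendsto_iff_norm_sub_tendsto_zero.1 hz)⟩
  rw [sub_norm_mul_cos_sub_arg (v := v)]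
  refine (Complex.abs_re_le_norm _).trans_eq ?_
  rw [norm_mul, Complex.norm_exp_ofReal_mul_I, one_mul]

end AmplitudePhase

section Bessel

open Filter Topology

/-- The Bessel function `J₀`, through Bessel's integral over a full period of the angle. -/
def besselJZero (s : ℝ) : ℝ :=
  (2 * π)⁻¹ * ∫ θ in -π..π, Real.cos (s * Real.cos θ)

/-- The `n`-th derivative of `J₀`: each differentiation under the integral sign brings out a factor
`cos θ` and shifts the phase by `π / 2`. -/
def besselJZeroDeriv (n : ℕ) (s : ℝ) : ℝ :=
  (2 * π)⁻¹ * ∫ θ in -π..π, Real.cos θ ^ n * Real.cos (s * Real.cos θ + n * (π / 2))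

lemma besselJZeroDeriv_zero : besselJZeroDeriv 0 = besselJZero := by
  ext s
  simp [besselJZeroDeriv, besselJZero]

lemma besselJZeroDeriv_one (s : ℝ) :
    besselJZeroDeriv 1 s = (2 * π)⁻¹ * ∫ θ in -π..π, -(Real.cos θ * Real.sin (s * Real.cos θ)) := by
  simp [besselJZeroDeriv, Real.cos_add_pi_div_two]

lemma besselJZeroDeriv_two (s : ℝ) :
    besselJZeroDeriv 2 s =
      (2 * π)⁻¹ * ∫ θ in -π..π, -(Real.cos θ ^ 2 * Real.cos (s * Real.cos θ)) := by
  simp [besselJZeroDeriv, mul_div_cancel₀, Real.cos_add_pi]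

lemma hasDerivAt_besselJZeroDeriv (n : ℕ) (s : ℝ) :
    HasDerivAt (besselJZeroDeriv n) (besselJZeroDeriv (n + 1) s) s := by
  refine (intervalIntegral.hasDerivAt_integral_of_dominated_loc_of_deriv_le
    (F := fun s θ => Real.cos θ ^ n * Real.cos (s * Real.cos θ + n * (π / 2)))
    (F' := fun s θ => Real.cos θ ^ (n + 1) * Real.cos (s * Real.cos θ + (n + 1 : ℕ) * (π / 2)))
    (bound := fun _ => 1) univ_mem
    (.of_forall fun s => (by fun_prop : Continuous _).aestronglyMeasurable)
    ((by fun_prop : Continuous _).intervalIntegrable _ _)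
    (by fun_prop : Continuous _).aestronglyMeasurable
    (.of_forall fun θ _ s _ => ?_) intervalIntegrable_const
    (.of_forall fun θ _ s _ => ?_)).2.const_mul _
  · rw [norm_mul, norm_pow]
    exact mul_le_one₀ (pow_le_one₀ (norm_nonneg _) (Real.abs_cos_le_one _)) (norm_nonneg _)
      (Real.abs_cos_le_one _)
  · have harg : s * Real.cos θ + (n + 1 : ℕ) * (π / 2) =
        s * Real.cos θ + n * (π / 2) + π / 2 := by push_cast; ring
    have h := ((((hasDerivAt_id s).mul_const (Real.cos θ)).add_const (n * (π / 2))).cos).const_mul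
      (Real.cos θ ^ n)
    refine h.congr_deriv ?_
    rw [harg, Real.cos_add_pi_div_two, id]
    ring

theorem bessel_equation_zero (s : ℝ) :
    s * (besselJZeroDeriv 2 s + besselJZero s) + besselJZeroDeriv 1 s = 0 := by
  have hd : ∀ θ ∈ uIcc (-π) π, HasDerivAt (fun θ => -(Real.sin θ * Real.sin (s * Real.cos θ)))
      (s * (-(Real.cos θ ^ 2 * Real.cos (s * Real.cos θ)) + Real.cos (s * Real.cos θ))
        + -(Real.cos θ * Real.sin (s * Real.cos θ))) θ := by
    intro θ _
    have h := ((Real.hasDerivAt_sin θ).mul ((Real.hasDerivAt_cos θ).const_mul s).sin).neg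
    refine h.congr_deriv ?_
    linear_combination (Real.cos (s * Real.cos θ) * s) * Real.sin_sq_add_cos_sq θ
  have hint := intervalIntegral.integral_eq_sub_of_hasDerivAt hd
    ((by fun_prop : Continuous _).intervalIntegrable _ _)
  rw [intervalIntegral.integral_add, intervalIntegral.integral_const_mul,
    intervalIntegral.integral_add] at hint
  · rw [besselJZeroDeriv_one, besselJZeroDeriv_two, besselJZero, ← mul_add, mul_left_comm,
      ← mul_add, hint]
    simp
  all_goals exact (by fun_prop : Continuous _).intervalIntegrable _ _

lemma besselJZero_pos {s : ℝ} (hs : |s| < π / 2) : 0 < besselJZero s := by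
  refine mul_pos (by positivity) <| intervalIntegral.intervalIntegral_pos_of_pos
    ((by fun_prop : Continuous _).intervalIntegrable _ _) (fun θ => ?_) (by linarith [Real.pi_pos])
  refine Real.cos_pos_of_mem_Ioo (abs_lt.1 ?_)
  rw [abs_mul]
  exact (mul_le_of_le_one_right (abs_nonneg s) (Real.abs_cos_le_one θ)).trans_lt hs

variable {s : ℝ}

lemma hasDerivAt_sqrt_mul_besselJZero (hs : 0 < s) :
    HasDerivAt (fun s => √s * besselJZero s)
      (√s * besselJZeroDeriv 1 s + besselJZero s / (2 * √s)) s := by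
  have hJ := hasDerivAt_besselJZeroDeriv 0 s
  rw [besselJZeroDeriv_zero] at hJ
  exact ((Real.hasDerivAt_sqrt hs.ne').mul hJ).congr_deriv (by ring)

lemma hasDerivAt_deriv_sqrt_mul_besselJZero (hs : 0 < s) :
    HasDerivAt (fun s => √s * besselJZeroDeriv 1 s + besselJZero s / (2 * √s))
      (-(1 + 1 / (4 * s ^ 2)) * (√s * besselJZero s)) s := by
  have hJ := hasDerivAt_besselJZeroDeriv 0 s
  rw [besselJZeroDeriv_zero] at hJ
  have hsqrt : 0 < √s := Real.sqrt_pos.2 hs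
  have h := ((Real.hasDerivAt_sqrt hs.ne').mul (hasDerivAt_besselJZeroDeriv 1 s)).add
    (hJ.div ((Real.hasDerivAt_sqrt hs.ne').const_mul 2) (by positivity))
  refine h.congr_deriv ?_
  have hode := bessel_equation_zero s
  have hsq : s = √s ^ 2 := (Real.sq_sqrt hs.le).symm
  simp only [zero_add, one_add_one_eq_two] at *
  generalize besselJZero s = J at *
  generalize besselJZeroDeriv 1 s = J' at *
  generalize besselJZeroDeriv 2 s = J'' at *
  generalize √s = x at *
  subst hsq
  field_simp
  linear_combination 16 * x ^ 2 * hode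

theorem exists_tendsto_sqrt_mul_besselJZero_sub_mul_cos :
    ∃ A > 0, ∃ φ, Tendsto (fun s => √s * besselJZero s - A * Real.cos (s - φ)) atTop (𝓝 0) := by
  have hpos : ∀ s ∈ Ici (1 : ℝ), 0 < s := fun s hs => one_pos.trans_le hs
  refine exists_tendsto_sub_mul_cos (a := 1) (L := 0) (q := fun s => 1 / (4 * s ^ 2))
    (b := fun s => 1 / (4 * s ^ 2)) (β := fun s => -(4 * s)⁻¹)
    (fun s hs => hasDerivAt_sqrt_mul_besselJZero (hpos s hs))
    (fun s hs => hasDerivAt_deriv_sqrt_mul_besselJZero (hpos s hs))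
    (fun s _ => (abs_of_nonneg (by positivity)).le) (fun s hs => ?_) ?_ (Or.inl ?_)
  · have hs0 := hpos s hs
    refine (((hasDerivAt_id s).const_mul 4).inv (by positivity)).neg.congr_deriv ?_
    simp only [id]
    field_simp
  · simpa using (tendsto_inv_atTop_zero.comp
      (tendsto_id.const_mul_atTop (four_pos : (0 : ℝ) < 4))).neg
  · have : |(1 : ℝ)| < π / 2 := by linarith [abs_one (α := ℝ), Real.pi_gt_three]
    simpa using (besselJZero_pos this).ne'

end Bessel

section Variation

open Filter Topology

variable {r : ℝ} {E : Set ℝ} {a b : ℝ → ℂ}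

lemma rpow_mul_le_rVar (hr : 0 < r) {N : ℕ} {t : Fin (N + 1) → ℝ} (ht : StrictMono t)
    (htE : ∀ i, t i ∈ E) {δ : ℝ≥0∞}
    (hδ : ∀ i : Fin N, δ ≤ ‖a (t i.succ) - a (t i.castSucc)‖ₑ) :
    (N : ℝ≥0∞) ^ (1 / r) * δ ≤ rVar r E a := by
  calc (N : ℝ≥0∞) ^ (1 / r) * δ = (∑ _i : Fin N, δ ^ r) ^ (1 / r) := by
        rw [Finset.sum_const, Finset.card_fin, nsmul_eq_mul,
          ENNReal.mul_rpow_of_nonneg _ _ (by positivity), one_div, ENNReal.rpow_rpow_inv hr.ne']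
    _ ≤ (∑ i : Fin N, ‖a (t i.succ) - a (t i.castSucc)‖ₑ ^ r) ^ (1 / r) := by
        gcongr with i
        exact hδ i
    _ ≤ rVar r E a := le_iSup_of_le N <| le_iSup_of_le t <| le_iSup₂_of_le ht htE le_rfl

lemma rVar_mono (hr : 0 ≤ r) (h : ∀ s ∈ E, ∀ t ∈ E, ‖a t - a s‖ ≤ ‖b t - b s‖) :
    rVar r E a ≤ rVar r E b := by
  refine iSup_mono fun N => iSup_mono fun t => iSup₂_mono fun _ htE => ?_
  gcongr
  exact h _ (htE _) _ (htE _)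

variable {f : ℝ → ℝ} {A φ : ℝ}

lemma frequently_forall_div_sqrt_le (hA : 0 < A)
    (hf : Tendsto (fun s => √s * f s - A * Real.cos (s - φ)) atTop (𝓝 0)) :
    ∃ᶠ l in atTop, ∀ k : ℕ, k * π ≤ l → A / 4 / √l ≤ (-1) ^ k * f (l + k * π) := by
  obtain ⟨S, hS⟩ := eventually_atTop.1 <|
    (tendsto_zero_iff_abs_tendsto_zero _).1 hf |>.eventually_le_const (half_pos hA)
  have hpeaks : Tendsto (fun n : ℕ => φ + n * (2 * π)) atTop atTop :=
    tendsto_atTop_add_const_left _ _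
      (tendsto_natCast_atTop_atTop.atTop_mul_const Real.two_pi_pos)
  refine hpeaks.frequently (Eventually.frequently ?_)
  filter_upwards [hpeaks.eventually_ge_atTop S, hpeaks.eventually_gt_atTop 0] with n hnS hn0 k hk
  set l := φ + n * (2 * π)
  have hk0 : 0 ≤ k * π := by positivity
  have hcos : Real.cos (l + k * π - φ) = (-1) ^ k := by
    rw [← Real.cos_nat_mul_pi, ← Real.cos_add_nat_mul_two_pi (k * π) n]
    congr 1
    ring
  have hclose := (abs_le.1 (hS (l + k * π) (by linarith)))
  have hamp : A / 2 ≤ √(l + k * π) * ((-1) ^ k * f (l + k * π)) := by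
    simp only [hcos] at hclose
    rcases neg_one_pow_eq_or ℝ k with h | h <;> rw [h] at hclose ⊢ <;> linarith
  have hsqrt : √(l + k * π) ≤ 2 * √l := by
    rw [Real.sqrt_le_left (by positivity), mul_pow, Real.sq_sqrt hn0.le]
    linarith
  have hsign : 0 < (-1) ^ k * f (l + k * π) :=
    pos_of_mul_pos_right ((half_pos hA).trans_le hamp) (Real.sqrt_nonneg _)
  rw [div_le_iff₀ (Real.sqrt_pos.2 hn0)]
  linarith [mul_le_mul_of_nonneg_right hsqrt hsign.le]

lemma ofReal_floor_rpow_mul_le_rVar (hr : 0 < r) {l c : ℝ} (hl : 0 < l) (hc : 0 ≤ c)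
    (hf : ∀ k : ℕ, k * π ≤ l → c ≤ (-1) ^ k * f (l + k * π)) :
    ENNReal.ofReal ((⌊l / π⌋₊ : ℝ) ^ (1 / r) * c) ≤
      rVar r (Icc 1 2) fun t => (f (l * t) : ℂ) := by
  set N := ⌊l / π⌋₊
  set t : Fin (N + 1) → ℝ := fun i => 1 + (i : ℕ) * π / l with ht
  have hle : ∀ k : ℕ, k ≤ N → k * π ≤ l := fun k hk =>
    (le_div_iff₀ Real.pi_pos).1 ((Nat.le_floor_iff (by positivity)).1 hk)
  have hlt : ∀ i, l * t i = l + (i : ℕ) * π := fun i => by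
    simp only [ht]
    field_simp
  have ht_mono : StrictMono t := fun i j hij => by
    have : ((i : ℕ) : ℝ) < (j : ℕ) := by exact_mod_cast hij
    simp only [ht]
    gcongr
  have ht_mem : ∀ i, t i ∈ Icc (1 : ℝ) 2 := fun i => by
    have h0 : 0 ≤ (i : ℕ) * π / l := by positivity
    have h1 : (i : ℕ) * π / l ≤ 1 := (div_le_one hl).2 (hle i (Nat.lt_succ_iff.1 i.2))
    constructor <;> simp only [ht] <;> linarith
  have hjump : ∀ i : Fin N, c ≤ ‖(f (l * t i.succ) : ℂ) - f (l * t i.castSucc)‖ := fun i => by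
    rw [← Complex.ofReal_sub, Complex.norm_real, Real.norm_eq_abs, hlt, hlt, Fin.val_succ,
      Fin.val_castSucc, ← one_mul |_|, ← abs_neg_one_pow (α := ℝ) (i + 1), ← abs_mul]
    refine le_trans ?_ (le_abs_self _)
    have h0 := hf i (hle i i.2.le)
    have h1 := hf (i + 1) (hle _ i.2)
    rw [pow_succ] at h1 ⊢
    linarith
  rw [ENNReal.ofReal_mul (by positivity), ← ENNReal.ofReal_rpow_of_nonneg (by positivity)
    (by positivity), ENNReal.ofReal_natCast]
  refine rpow_mul_le_rVar hr ht_mono ht_mem fun i => ?_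
  rw [← ofReal_norm]
  exact ENNReal.ofReal_le_ofReal (hjump i)

lemma tendsto_floor_rpow_mul_div_sqrt (hr0 : 0 < r) (hr2 : r < 2) {c : ℝ} (hc : 0 < c) :
    Tendsto (fun l : ℝ => (⌊l / π⌋₊ : ℝ) ^ (1 / r) * (c / √l)) atTop atTop := by
  have hexp : 0 < 1 / r - 1 / 2 := sub_pos.2 (one_div_lt_one_div_of_lt hr0 hr2)
  refine tendsto_atTop_mono' _ ?_
    ((tendsto_rpow_atTop hexp).const_mul_atTop (by positivity : 0 < (1 / 8) ^ (1 / r) * c))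
  filter_upwards [eventually_ge_atTop 8] with l hl
  have hl0 : 0 < l := by linarith
  have hfloor : l / 8 ≤ ⌊l / π⌋₊ := by
    have h1 : l / π < ⌊l / π⌋₊ + 1 := Nat.lt_floor_add_one _
    have h2 : l / 4 ≤ l / π := div_le_div_of_nonneg_left hl0.le Real.pi_pos Real.pi_lt_four.le
    linarith
  calc (1 / 8) ^ (1 / r) * c * l ^ (1 / r - 1 / 2) = (l / 8) ^ (1 / r) * (c / √l) := by
        rw [Real.rpow_sub hl0, ← Real.sqrt_eq_rpow, div_eq_mul_one_div l 8,
          Real.mul_rpow hl0.le (by norm_num)]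
        ring
    _ ≤ (⌊l / π⌋₊ : ℝ) ^ (1 / r) * (c / √l) := by gcongr

theorem exists_le_rVar_comp_mul_of_tendsto (hr0 : 0 < r) (hr2 : r < 2) (hA : 0 < A)
    (hf : Tendsto (fun s => √s * f s - A * Real.cos (s - φ)) atTop (𝓝 0)) (B : ℝ≥0) :
    ∃ l : ℝ, B ≤ rVar r (Icc 1 2) fun t => (f (l * t) : ℂ) := by
  have hlarge := (tendsto_floor_rpow_mul_div_sqrt hr0 hr2 (by positivity : 0 < A / 4))
    |>.eventually_ge_atTop (B : ℝ)
  obtain ⟨l, hl, hBl, hl0⟩ := (frequently_forall_div_sqrt_le hA hf).and_eventually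
    (hlarge.and (eventually_gt_atTop 0)) |>.exists
  refine ⟨l, le_trans ?_ (ofReal_floor_rpow_mul_le_rVar hr0 hl0 (by positivity) hl)⟩
  rw [← ENNReal.ofReal_coe_nnreal]
  exact ENNReal.ofReal_le_ofReal hBl

end Variation

section SphereMeasure

open Measure

variable {E : Type*} [NormedAddCommGroup E] [NormedSpace ℝ E]

/-- The truncated cone over the part of the unit sphere lying in `s`; its volume computes
`Measure.toSphere`. -/
def sphericalCone (s : Set E) : Set E :=
  {x | ‖x‖ ∈ Ioo 0 1 ∧ ‖x‖⁻¹ • x ∈ s}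

open scoped Pointwise in
lemma Ioo_smul_image_val_preimage_val (s : Set E) :
    Ioo (0 : ℝ) 1 • (((↑) : sphere (0 : E) 1 → E) '' ((↑) ⁻¹' s)) = sphericalCone s := by
  ext x
  constructor
  · rintro ⟨r, hr, _, ⟨y, hy : (y : E) ∈ s, rfl⟩, rfl⟩
    have hnorm : ‖r • (y : E)‖ = r := by
      rw [norm_smul, norm_eq_of_mem_sphere, mul_one, Real.norm_of_nonneg hr.1.le]
    refine ⟨by simpa only [hnorm] using hr, ?_⟩
    simpa only [hnorm, smul_smul, inv_mul_cancel₀ hr.1.ne', one_smul] using hy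
  · rintro ⟨hx, hxs⟩
    have hx0 : ‖x‖ ≠ 0 := hx.1.ne'
    refine ⟨‖x‖, hx, ‖x‖⁻¹ • x, ⟨⟨‖x‖⁻¹ • x, ?_⟩, hxs, rfl⟩, smul_inv_smul₀ hx0 x⟩
    simp [norm_smul, hx0]

variable [MeasurableSpace E] [BorelSpace E] {s : Set E}

lemma measurableSet_sphericalCone (hs : MeasurableSet s) : MeasurableSet (sphericalCone s) :=
  (measurable_norm measurableSet_Ioo).inter ((measurable_norm.inv.smul measurable_id) hs)

lemma map_val_toSphere_apply (μ : Measure E) (hs : MeasurableSet s) :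
    μ.toSphere.map (↑) s = Module.finrank ℝ E * μ (sphericalCone s) := by
  rw [map_apply measurable_subtype_coe hs, toSphere_apply' _ (measurable_subtype_coe hs),
    Ioo_smul_image_val_preimage_val]

lemma ae_norm_eq_one_sphereMeasure (d : ℕ) : ∀ᵐ y ∂sphereMeasure d, ‖y‖ = 1 := by
  refine ae_smul_measure ?_ _
  rw [ae_map_iff measurable_subtype_coe.aemeasurable (measurableSet_eq_fun measurable_norm
    measurable_const)]
  exact .of_forall fun y => norm_eq_of_mem_sphere y

end SphereMeasure

section Circle

/-- The parametrization of the unit circle of `Euc 2` by the angle. -/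
def circlePoint (θ : ℝ) : Euc 2 :=
  !₂[Real.cos θ, Real.sin θ]

lemma norm_circlePoint (θ : ℝ) : ‖circlePoint θ‖ = 1 := by
  simp [circlePoint, EuclideanSpace.norm_eq]

@[fun_prop]
lemma continuous_circlePoint : Continuous circlePoint := by
  refine (PiLp.continuous_toLp 2 _).comp (continuous_pi fun i => ?_)
  fin_cases i
  exacts [Real.continuous_cos, Real.continuous_sin]

lemma lintegral_eq_lintegral_smul_circlePoint {f : Euc 2 → ℝ≥0∞} (hf : Measurable f) :
    ∫⁻ x, f x = ∫⁻ p in polarCoord.target, ENNReal.ofReal p.1 * f (p.1 • circlePoint p.2) := by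
  have hmp : MeasurePreserving (fun p : ℝ × ℝ => (!₂[p.1, p.2] : Euc 2)) :=
    (PiLp.volume_preserving_toLp (Fin 2)).comp (volume_preserving_finTwoArrow ℝ).symm
  rw [← hmp.lintegral_comp hf, ← lintegral_comp_polarCoord_symm]
  congr! 4 with p
  ext i
  fin_cases i <;> simp [circlePoint]

lemma smul_circlePoint_mem_sphericalCone_iff {s : Set (Euc 2)} {r θ : ℝ} (hr : 0 < r) :
    r • circlePoint θ ∈ sphericalCone s ↔ r < 1 ∧ circlePoint θ ∈ s := by
  have hnorm : ‖r • circlePoint θ‖ = r := by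
    rw [norm_smul, norm_circlePoint, mul_one, Real.norm_of_nonneg hr.le]
  simp only [sphericalCone, mem_ofPred_eq, hnorm, mem_Ioo, hr, true_and, inv_smul_smul₀ hr.ne']

lemma setLIntegral_Ioo_zero_one_ofReal : ∫⁻ r in Ioo (0 : ℝ) 1, ENNReal.ofReal r = 2⁻¹ := by
  have hint : IntegrableOn (fun r : ℝ => r) (Ioo 0 1) :=
    continuous_id.integrableOn_Icc.mono_set Ioo_subset_Icc_self
  rw [← ofReal_integral_eq_lintegral_ofReal hint
    ((ae_restrict_mem measurableSet_Ioo).mono fun r hr => hr.1.le), ← integral_Ioc_eq_integral_Ioo,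
    ← intervalIntegral.integral_of_le zero_le_one, integral_id]
  norm_num [ENNReal.ofReal_div_of_pos]

lemma volume_sphericalCone {s : Set (Euc 2)} (hs : MeasurableSet s) :
    volume (sphericalCone s) = 2⁻¹ * volume (circlePoint ⁻¹' s ∩ Ioo (-π) π) := by
  have hpre : MeasurableSet (circlePoint ⁻¹' s) := continuous_circlePoint.measurable hs
  have hcone : ∀ p ∈ polarCoord.target,
      ENNReal.ofReal p.1 * (sphericalCone s).indicator 1 (p.1 • circlePoint p.2) =
        (Iio 1).indicator ENNReal.ofReal p.1 * (circlePoint ⁻¹' s).indicator 1 p.2 := by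
    rintro ⟨r, θ⟩ ⟨hr, -⟩
    by_cases h1 : r < 1 <;> by_cases h2 : circlePoint θ ∈ s <;>
      simp [indicator, smul_circlePoint_mem_sphericalCone_iff hr.out, h1, h2]
  rw [← lintegral_indicator_one (measurableSet_sphericalCone hs),
    lintegral_eq_lintegral_smul_circlePoint
      (measurable_one.indicator (measurableSet_sphericalCone hs)),
    setLIntegral_congr_fun polarCoord.open_target.measurableSet hcone, polarCoord_target,
    Measure.volume_eq_prod, ← Measure.prod_restrict,
    lintegral_prod_mul
      (ENNReal.measurable_ofReal.indicator measurableSet_Iio).aemeasurable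
      (measurable_one.indicator hpre).aemeasurable,
    lintegral_indicator measurableSet_Iio, Measure.restrict_restrict measurableSet_Iio,
    inter_comm, Ioi_inter_Iio, setLIntegral_Ioo_zero_one_ofReal, lintegral_indicator_one hpre,
    Measure.restrict_apply hpre]

theorem map_val_toSphere_eq_map_circlePoint :
    (volume : Measure (Euc 2)).toSphere.map (↑) =
      (volume.restrict (Ioo (-π) π)).map circlePoint := by
  ext s hs
  rw [map_val_toSphere_apply _ hs, volume_sphericalCone hs,
    Measure.map_apply continuous_circlePoint.measurable hs,
    Measure.restrict_apply (continuous_circlePoint.measurable hs), ← mul_assoc]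
  simp [ENNReal.mul_inv_cancel]

theorem integral_sphereMeasure_two {F : Type*} [NormedAddCommGroup F] [NormedSpace ℝ F]
    {f : Euc 2 → F} (hf : Continuous f) :
    ∫ y, f y ∂sphereMeasure 2 = (2 * π)⁻¹ • ∫ θ in -π..π, f (circlePoint θ) := by
  have hmass : (volume : Measure (Euc 2)).toSphere univ = ENNReal.ofReal (2 * π) := by
    rw [Measure.toSphere_apply_univ, EuclideanSpace.volume_ball_fin_two]
    simp [ENNReal.ofReal_mul]
  rw [sphereMeasure, integral_smul_measure, hmass, map_val_toSphere_eq_map_circlePoint,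
    integral_map continuous_circlePoint.aemeasurable hf.aestronglyMeasurable,
    intervalIntegral.integral_of_le (by linarith [Real.pi_pos]), integral_Ioc_eq_integral_Ioo,
    ENNReal.toReal_inv, ENNReal.toReal_ofReal (by positivity)]

end Circle

section PlaneWave

variable {d : ℕ} {ξ x : Euc d} {R t : ℝ}

/-- The plane wave of frequency `ξ`, cut off to the ball of radius `R` to make it `p`-integrable. -/
def truncatedPlaneWave (ξ : Euc d) (R : ℝ) : Euc d → ℂ :=
  (ball 0 R).indicator fun x => Complex.exp ((inner ℝ ξ x : ℝ) * Complex.I)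

lemma stronglyMeasurable_truncatedPlaneWave : StronglyMeasurable (truncatedPlaneWave ξ R) :=
  (by fun_prop : Continuous fun x : Euc d => Complex.exp ((inner ℝ ξ x : ℝ) * Complex.I))
    |>.stronglyMeasurable.indicator measurableSet_ball

lemma norm_truncatedPlaneWave (x : Euc d) :
    ‖truncatedPlaneWave ξ R x‖ = (ball 0 R).indicator 1 x := by
  rw [truncatedPlaneWave, norm_indicator_eq_indicator_norm]
  simp only [Complex.norm_exp_ofReal_mul_I, Pi.one_def]

lemma sphAvg_truncatedPlaneWave (ht : 0 ≤ t) (hR : ‖x‖ + t < R) :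
    sphAvg (truncatedPlaneWave ξ R) t x =
      Complex.exp ((inner ℝ ξ x : ℝ) * Complex.I) *
        ∫ y, Complex.exp (-(t * inner ℝ ξ y : ℝ) * Complex.I) ∂sphereMeasure d := by
  rw [sphAvg, ← integral_const_mul]
  refine integral_congr_ae <| (ae_norm_eq_one_sphereMeasure d).mono fun y hy => ?_
  beta_reduce
  have hmem : x - t • y ∈ ball 0 R := mem_ball_zero_iff.2 <| by
    calc ‖x - t • y‖ ≤ ‖x‖ + ‖t • y‖ := norm_sub_le _ _
      _ = ‖x‖ + t := by rw [norm_smul, hy, mul_one, Real.norm_of_nonneg ht]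
      _ < R := hR
  rw [truncatedPlaneWave, indicator_of_mem hmem, ← Complex.exp_add, inner_sub_right,
    real_inner_smul_right]
  push_cast
  ring_nf

lemma re_integral_exp_sphereMeasure_two (l t : ℝ) :
    (∫ y, Complex.exp (-(t * inner ℝ (EuclideanSpace.single 0 l) y : ℝ) * Complex.I)
      ∂sphereMeasure 2).re = besselJZero (l * t) := by
  rw [integral_sphereMeasure_two (by fun_prop), Complex.smul_re, ← Complex.reCLM_apply,
    ← Complex.reCLM.intervalIntegral_comp_comm
      ((by fun_prop : Continuous _).intervalIntegrable _ _), besselJZero, smul_eq_mul]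
  congr! 3 with θ
  rw [Complex.reCLM_apply, ← Complex.ofReal_neg, Complex.exp_ofReal_mul_I_re, Real.cos_neg,
    EuclideanSpace.inner_single_left]
  simp [circlePoint, mul_assoc, mul_left_comm]

lemma rVar_besselJZero_le_VrIA {r : ℝ} (hr : 0 ≤ r) (l : ℝ) {x : Euc 2} (hx : x ∈ ball 0 1) :
    rVar r (Icc 1 2) (fun t => (besselJZero (l * t) : ℂ)) ≤
      VrIA r (truncatedPlaneWave (EuclideanSpace.single 0 l) 3) x := by
  have hx1 : ‖x‖ < 1 := mem_ball_zero_iff.1 hx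
  refine rVar_mono hr fun s hs t ht => ?_
  rw [sphAvg_truncatedPlaneWave (by linarith [ht.1]) (by linarith [ht.2]),
    sphAvg_truncatedPlaneWave (by linarith [hs.1]) (by linarith [hs.2]), ← mul_sub, norm_mul,
    Complex.norm_exp_ofReal_mul_I, one_mul, ← Complex.ofReal_sub, Complex.norm_real,
    ← re_integral_exp_sphereMeasure_two, ← re_integral_exp_sphereMeasure_two, ← Complex.sub_re]
  exact Complex.abs_re_le_norm _

end PlaneWave

section Unboundedness

variable {p q : ℝ≥0∞}

lemma lqNorm_eq_eLpNorm {α : Type*} [MeasurableSpace α] {μ : Measure α} (hq : q ≠ 0)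
    (g : α → ℝ≥0∞) : lqNorm q g μ = eLpNorm g q μ := by
  rw [lqNorm, eLpNorm, if_neg hq]
  rfl

lemma mul_measure_rpow_le_lqNorm {α : Type*} [MeasurableSpace α] {μ : Measure α} (hq : q ≠ 0)
    {s : Set α} (hs : MeasurableSet s) (hμs : μ s ≠ 0) {B : ℝ≥0∞} {g : α → ℝ≥0∞}
    (hg : ∀ x ∈ s, B ≤ g x) : B * μ s ^ (1 / q.toReal) ≤ lqNorm q g μ := by
  rw [lqNorm_eq_eLpNorm hq, ← enorm_eq_self B, ← eLpNorm_indicator_const' hs hμs hq]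
  refine eLpNorm_mono_enorm fun x => ?_
  by_cases hx : x ∈ s <;> simp [hx, hg]

theorem not_isBddLpLq_of_forall_exists_le {d : ℕ} {T : (Euc d → ℂ) → Euc d → ℝ≥0∞} (hq : q ≠ 0)
    {g : Euc d → ℝ} (hg : MemLp g p) {s : Set (Euc d)} (hs : MeasurableSet s)
    (hs0 : volume s ≠ 0)
    (hT : ∀ B : ℝ≥0, ∃ f, AEStronglyMeasurable f ∧ (∀ x, ‖f x‖ ≤ ‖g x‖) ∧ ∀ x ∈ s, B ≤ T f x) :
    ¬ IsBddLpLq d p q T := by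
  rintro ⟨C, hC⟩
  have hm : volume s ^ (1 / q.toReal) ≠ 0 := fun h =>
    (ENNReal.rpow_eq_zero_iff.1 h).elim (hs0 ·.1) fun h => h.2.not_ge (by positivity)
  have hbound : C * eLpNorm g p ≠ ∞ := ENNReal.mul_ne_top ENNReal.coe_ne_top hg.eLpNorm_ne_top
  have hle : ∀ B : ℝ≥0, (B : ℝ≥0∞) ≤ C * eLpNorm g p / volume s ^ (1 / q.toReal) := fun B => by
    obtain ⟨f, hf, hfg, hTf⟩ := hT B
    rw [ENNReal.le_div_iff_mul_le (.inl hm) (.inr hbound)]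
    have hlower := mul_measure_rpow_le_lqNorm hq hs hs0 hTf
    have hupper := hC f (hg.mono hf (.of_forall hfg))
    exact hlower.trans <| hupper.trans <| by gcongr; exact eLpNorm_mono hfg
  exact ENNReal.div_ne_top hbound hm (ENNReal.eq_top_of_forall_nnreal_le hle)

theorem local_variation_dim2_unbounded_general (r : ℝ) (hr0 : 0 < r) (hr2 : r < 2)
    (p q : ℝ≥0∞) (_hp : 0 < p) (hq : 0 < q) :
    ¬ IsBddLpLq 2 p q (VrIA r) := by
  obtain ⟨A, hA, φ, hJ⟩ := exists_tendsto_sqrt_mul_besselJZero_sub_mul_cos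
  have hball : MemLp ((ball (0 : Euc 2) 3).indicator (1 : Euc 2 → ℝ)) p :=
    memLp_indicator_const p measurableSet_ball 1 (.inr measure_ball_lt_top.ne)
  refine not_isBddLpLq_of_forall_exists_le hq.ne' hball (measurableSet_ball (x := 0) (ε := 1))
    (measure_ball_pos _ _ one_pos).ne' fun B => ?_
  obtain ⟨l, hl⟩ := exists_le_rVar_comp_mul_of_tendsto hr0 hr2 hA hJ B
  refine ⟨truncatedPlaneWave (EuclideanSpace.single 0 l) 3,
    stronglyMeasurable_truncatedPlaneWave.aestronglyMeasurable, fun x => ?_,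
    fun x hx => hl.trans (rVar_besselJZero_le_VrIA hr0.le l hx)⟩
  rw [norm_truncatedPlaneWave]
  exact Real.le_norm_self _

end Unboundedness

/-- Theorem 1.6 (iii): in two dimensions, for `1 ≤ r < 2` the operator `V_r^I A`
is not bounded from `L^p(ℝ²)` to `L^q(ℝ²)` for any exponents `1 ≤ p, q ≤ ∞`. -/
theorem local_variation_dim2_unbounded (r : ℝ) (hr1 : 1 ≤ r) (hr2 : r < 2)
    (p q : ℝ≥0∞) (hp : 1 ≤ p) (hq : 1 ≤ q) :
    ¬ IsBddLpLq 2 p q (VrIA r) :=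
  local_variation_dim2_unbounded_general r (one_pos.trans_le hr1) hr2 p q
    (one_pos.trans_le hp) (one_pos.trans_le hq)
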